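/- Let (B, A, i, e, l) be a cleft extension of abelian categories in which A and B have arbitrary coproducts and i preserves coproducts, let q : A → B be a left adjoint of i, and let l(P₁) →δ l(P₀) → A → 0 be a projective presentation of an object A of A with P₀, P₁ projective in B. If A is silting (respectively, partial silting) with respect to δ, then q(A) is silting (respectively, partial silting) with respect to q(δ), where P₁ ≅ q(l(P₁)) →q(δ) q(l(P₀)) ≅ P₀ → q(A) → 0 is the induced projective presentation. -/

import Mathlib

open CategoryTheory Limits

universe v u₁ u₂

/-- For a morphism `σ : X ⟶ Y` in a category `C`, `DClass σ` is the class of objects `L`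
such that `Hom_C(σ, L) : Hom_C(Y, L) → Hom_C(X, L)` is surjective. -/
def DClass {C : Type u₁} [Category.{v} C] {X Y : C} (σ : X ⟶ Y) (L : C) : Prop :=
  Function.Surjective (fun g : Y ⟶ L => σ ≫ g)

/-- A class of objects of `C` is closed under coproducts if it contains the coproduct of any
family of its members. -/
def ClosedUnderCoproducts {C : Type u₁} [Category.{v} C] [HasCoproducts.{v} C]
    (P : C → Prop) : Prop :=
  ∀ (I : Type v) (f : I → C), (∀ j, P (f j)) → P (∐ f)

/-- `Gen X` is the class of epimorphic images of coproducts of copies of `X`. -/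
def Gen {C : Type u₁} [Category.{v} C] [HasCoproducts.{v} C] (X L : C) : Prop :=
  ∃ (I : Type v) (p : (∐ fun _ : I => X) ⟶ L), Epi p

/-- Given a morphism `σ` occurring in a projective presentation `P₁ ⟶ P₀ ⟶ X ⟶ 0`, the object
`X` is partial silting with respect to `σ` if `X ∈ D_σ` and `D_σ` is closed under coproducts. -/
def IsPartialSilting {C : Type u₁} [Category.{v} C] [HasCoproducts.{v} C]
    {P₁ P₀ : C} (σ : P₁ ⟶ P₀) (X : C) : Prop :=
  DClass σ X ∧ ClosedUnderCoproducts (DClass σ)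

/-- Given a morphism `σ` occurring in a projective presentation `P₁ ⟶ P₀ ⟶ X ⟶ 0`, the object
`X` is silting with respect to `σ` if `Gen X = D_σ`. -/
def IsSilting {C : Type u₁} [Category.{v} C] [HasCoproducts.{v} C]
    {P₁ P₀ : C} (σ : P₁ ⟶ P₀) (X : C) : Prop :=
  ∀ L : C, Gen X L ↔ DClass σ L

/-!
Everything is transported along `q ⊣ i`. The adjunction identifies `Hom(q δ, L)` with `Hom(δ, i L)`,
so `L ∈ D_{q δ}` iff `i L ∈ D_δ`. Similarly `L ∈ Gen (q A)` iff `i L ∈ Gen A`: `q` and `i` preserve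
coproducts and epimorphisms, so it is enough that the counit is epi, which holds because `i` is
faithful, and that the unit is epi at `A`. In the partial silting case the same epimorphism
`A ⟶ i (q A)` gives `i (q A) ∈ D_δ`, because `D_δ` is closed under quotients when the source of `δ`
is projective.

Epimorphy of the unit at `A` is where the cleft structure enters. Since `i ⋙ e ≅ 𝟭`, the
unit of the composite adjunction `l ⋙ q ⊣ i ⋙ e` is invertible, and it factors through `e` applied
to the unit of `q ⊣ i` at `l P`; as `e` reflects epimorphisms, that unit is epi at every `l P`,
hence at every quotient of `l P`.
-/

namespace DClass

variable {C : Type u₁} [Category.{v} C] {X Y : C} {σ : X ⟶ Y}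

theorem of_surjective_comp {L M : C} (h : DClass σ L) (p : L ⟶ M)
    (hp : Function.Surjective fun f : X ⟶ L => f ≫ p) : DClass σ M := by
  intro f
  obtain ⟨f', rfl⟩ := hp f
  obtain ⟨g, rfl⟩ := h f'
  exact ⟨g ≫ p, (Category.assoc σ g p).symm⟩

theorem of_epi [Projective X] {L M : C} (h : DClass σ L) (p : L ⟶ M) [Epi p] : DClass σ M :=
  h.of_surjective_comp p fun f => ⟨Projective.factorThru f p, Projective.factorThru_comp f p⟩

theorem of_iso {L M : C} (h : DClass σ L) (α : L ≅ M) : DClass σ M :=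
  h.of_surjective_comp α.hom fun f => ⟨f ≫ α.inv, by simp⟩

end DClass

namespace Gen

variable {C : Type u₁} [Category.{v} C] [HasCoproducts.{v} C] {X Y L M : C}

theorem of_epi (h : Gen X L) (f : L ⟶ M) [Epi f] : Gen X M := by
  obtain ⟨I, p, _⟩ := h
  exact ⟨I, p ≫ f, inferInstance⟩

theorem of_epi_generator (h : Gen Y L) (f : X ⟶ Y) [Epi f] : Gen X L := by
  obtain ⟨I, p, _⟩ := h
  exact ⟨I, Limits.Sigma.map (fun _ => f) ≫ p, inferInstance⟩

theorem map {D : Type u₂} [Category.{v} D] [HasCoproducts.{v} D] (F : C ⥤ D)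
    [∀ J : Type v, PreservesColimitsOfShape (Discrete J) F] [F.PreservesEpimorphisms]
    (h : Gen X L) : Gen (F.obj X) (F.obj L) := by
  obtain ⟨I, p, _⟩ := h
  exact ⟨I, (PreservesCoproduct.iso F fun _ => X).inv ≫ F.map p, inferInstance⟩

end Gen

section Adjunction

variable {A : Type u₁} {B : Type u₂} [Category.{v} A] [Category.{v} B]
  {q : A ⥤ B} {i : B ⥤ A}

theorem dClass_map_iff (adjq : q ⊣ i) {X Y : A} (δ : X ⟶ Y) (L : B) :
    DClass (q.map δ) L ↔ DClass δ (i.obj L) := by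
  have naturality : (fun g => δ ≫ g) ∘ adjq.homEquiv Y L =
      adjq.homEquiv X L ∘ fun g => q.map δ ≫ g :=
    funext fun g => (adjq.homEquiv_naturality_left δ g).symm
  rw [DClass, DClass, ← (adjq.homEquiv Y L).surjective_comp, naturality,
    (adjq.homEquiv X L).comp_surjective]

variable [HasCoproducts.{v} A] [HasCoproducts.{v} B]
  [∀ J : Type v, PreservesColimitsOfShape (Discrete J) i]

theorem ClosedUnderCoproducts.dClass_map (adjq : q ⊣ i) {X Y : A} {δ : X ⟶ Y}
    (h : ClosedUnderCoproducts (DClass δ)) : ClosedUnderCoproducts (DClass (q.map δ)) := by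
  intro I f hf
  have coproduct_mem : DClass δ (∐ fun j => i.obj (f j)) :=
    h I _ fun j => (dClass_map_iff adjq δ (f j)).1 (hf j)
  exact (dClass_map_iff adjq δ _).2 (coproduct_mem.of_iso (PreservesCoproduct.iso i f).symm)

theorem gen_obj_iff (adjq : q ⊣ i) [i.Faithful] [i.PreservesEpimorphisms]
    (X : A) [Epi (adjq.unit.app X)] (L : B) : Gen (q.obj X) L ↔ Gen X (i.obj L) := by
  have := adjq.isLeftAdjoint
  exact ⟨fun h => (h.map i).of_epi_generator (adjq.unit.app X),
    fun h => (h.map q).of_epi (adjq.counit.app L)⟩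

theorem IsSilting.map (adjq : q ⊣ i) [i.Faithful] [i.PreservesEpimorphisms]
    {X Y T : A} {δ : X ⟶ Y} [Epi (adjq.unit.app T)] (h : IsSilting δ T) :
    IsSilting (q.map δ) (q.obj T) := fun L =>
  calc Gen (q.obj T) L ↔ Gen T (i.obj L) := gen_obj_iff adjq T L
    _ ↔ DClass δ (i.obj L) := h (i.obj L)
    _ ↔ DClass (q.map δ) L := (dClass_map_iff adjq δ L).symm

theorem IsPartialSilting.map (adjq : q ⊣ i) {X Y T : A} [Projective X] {δ : X ⟶ Y}
    [Epi (adjq.unit.app T)] (h : IsPartialSilting δ T) :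
    IsPartialSilting (q.map δ) (q.obj T) :=
  ⟨(dClass_map_iff adjq δ _).2 (h.1.of_epi (adjq.unit.app T)), h.2.dClass_map adjq⟩

end Adjunction

theorem epi_app_of_epi {C : Type*} {D : Type*} [Category* C] [Category* D] {F G : C ⥤ D}
    [G.PreservesEpimorphisms] (α : F ⟶ G) {X Y : C} (π : X ⟶ Y) [Epi π] [Epi (α.app X)] :
    Epi (α.app Y) :=
  epi_of_epi_fac (α.naturality π)

section CompIsEquivalence

variable {A : Type*} {B : Type*} {D : Type*} [Category* A] [Category* B] [Category* D]
  {i : B ⥤ A} {e : A ⥤ D} {l : D ⥤ A} {q : A ⥤ B}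
  [e.ReflectsEpimorphisms] [(i ⋙ e).IsEquivalence]

theorem epi_unit_app_obj (adj : l ⊣ e) (adjq : q ⊣ i) (P : D) :
    Epi (adjq.unit.app (l.obj P)) := by
  have factorization : adj.unit.app P ≫ e.map (adjq.unit.app (l.obj P)) =
      (adj.comp adjq).unit.app P := (adj.comp_unit_app adjq P).symm
  exact e.epi_of_epi_map (epi_of_epi_fac factorization)

theorem epi_unit_app_of_epi (adj : l ⊣ e) (adjq : q ⊣ i) {P : D} {T : A}
    (π : l.obj P ⟶ T) [Epi π] : Epi (adjq.unit.app T) := by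
  have := Functor.preservesEpimorphisms_of_preserves_of_reflects i e
  have := adjq.isLeftAdjoint
  have := epi_unit_app_obj adj adjq P
  exact epi_app_of_epi adjq.unit π

end CompIsEquivalence

theorem stmt14_general {A : Type u₁} {B : Type u₂} [Category.{v} A] [Category.{v} B]
    [HasCoproducts.{v} A] [HasCoproducts.{v} B]
    {i : B ⥤ A} {e : A ⥤ B} {l : B ⥤ A} [e.ReflectsEpimorphisms]
    [∀ J : Type v, PreservesColimitsOfShape (Discrete J) i]
    (adj : l ⊣ e) (η : i ⋙ e ≅ 𝟭 B) {q : A ⥤ B} (adjq : q ⊣ i)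
    {X Y T : A} [Projective X] (δ : X ⟶ Y) {P : B} (π : l.obj P ⟶ T) [Epi π] :
    (IsSilting δ T → IsSilting (q.map δ) (q.obj T)) ∧
    (IsPartialSilting δ T → IsPartialSilting (q.map δ) (q.obj T)) := by
  have : i.Faithful := Functor.Faithful.of_comp_iso η
  have : (i ⋙ e).IsEquivalence := Functor.isEquivalence_of_iso η.symm
  have := Functor.preservesEpimorphisms_of_preserves_of_reflects i e
  have := epi_unit_app_of_epi adj adjq π
  exact ⟨IsSilting.map adjq, IsPartialSilting.map adjq⟩

/-- Let `(B, A, i, e, l)` be a cleft extension of abelian categories with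
arbitrary coproducts in which `i` preserves coproducts, let `q : A ⥤ B` be a left adjoint of
`i`, and let `l(P₁) ⟶δ l(P₀) ⟶π Ao ⟶ 0` be a projective presentation of an object `Ao` of `A`
with `P₀, P₁` projective in `B`. If `Ao` is silting (resp. partial silting) with respect to `δ`,
then `q(Ao)` is silting (resp. partial silting) with respect to `q(δ)`. -/
theorem stmt14 {A : Type u₁} {B : Type u₂} [Category.{v} A] [Category.{v} B]
    [Abelian A] [Abelian B] [EnoughProjectives A] [EnoughProjectives B]
    [HasCoproducts.{v} A] [HasCoproducts.{v} B]
    (i : B ⥤ A) (e : A ⥤ B) (l : B ⥤ A) [e.Faithful]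
    [PreservesFiniteLimits e] [PreservesFiniteColimits e]
    [∀ J : Type v, PreservesColimitsOfShape (Discrete J) i]
    (adj : l ⊣ e) (η : i ⋙ e ≅ 𝟭 B)
    (q : A ⥤ B) (adjq : q ⊣ i)
    {P₁ P₀ : B} (hP₁ : Projective P₁) (hP₀ : Projective P₀) {Ao : A}
    (δ : l.obj P₁ ⟶ l.obj P₀) (π : l.obj P₀ ⟶ Ao) [Epi π]
    (w : δ ≫ π = 0) (hexact : (ShortComplex.mk δ π w).Exact) :
    (IsSilting δ Ao → IsSilting (q.map δ) (q.obj Ao)) ∧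
    (IsPartialSilting δ Ao → IsPartialSilting (q.map δ) (q.obj Ao)) := by
  have := adj.map_projective P₁ hP₁
  exact stmt14_general adj η adjq δ π
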